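/- Assume a−b is even and N_{m−1} ≠ 0, and let k = max{ j ∈ ℤ : N_{m−j} ≠ 0 } (so k > 0). Then for a general linear form L ∈ R_1, setting S = R/(L) ≅ K[x,y] and letting φ̄ : ⊕_{i=1}^{n+2} S(−a_i) → ⊕_{j=1}^{n} S(−b_j) be the map induced by φ, the kernel of φ̄ is a free graded S-module isomorphic to S(−(m−k)) ⊕ S(−(m+k)) (this expresses that the restriction of the associated bundle to a general line splits as O(−k) ⊕ O(k) after normalization). -/

import Mathlib

open MvPolynomial

noncomputable section

variable {K : Type*} [Field K]

/-- `p` is homogeneous of (integer) degree `d`; for `d < 0` this forces `p = 0`. -/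
def homog (p : MvPolynomial (Fin 3) K) (d : ℤ) : Prop :=
  IsWeightedHomogeneous (fun _ : Fin 3 => (1 : ℤ)) p d

/-- The degree-`d` graded piece of `⊕_{i=1}^{N} R(-a i)`, as a `K`-subspace of
`Fin N → R`, `R = K[x,y,z]`. -/
def degPiece (N : ℕ) (a : Fin N → ℤ) (d : ℤ) :
    Submodule K (Fin N → MvPolynomial (Fin 3) K) :=
  Submodule.pi Set.univ fun i =>
    weightedHomogeneousSubmodule K (fun _ : Fin 3 => (1 : ℤ)) (d - a i)

lemma mem_degPiece {N : ℕ} {a : Fin N → ℤ} {d : ℤ} {v : Fin N → MvPolynomial (Fin 3) K} :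
    v ∈ degPiece (K := K) N a d ↔ ∀ i, homog (v i) (d - a i) := by
  simp [degPiece, Submodule.mem_pi, mem_weightedHomogeneousSubmodule, homog]

/-- The map `φ : ⊕ R(-a i) → ⊕ R(-b j)` given by the matrix `Φ`, as a `K`-linear map. -/
def phiK (n : ℕ) (Φ : Matrix (Fin n) (Fin (n + 2)) (MvPolynomial (Fin 3) K)) :
    (Fin (n + 2) → MvPolynomial (Fin 3) K) →ₗ[K] (Fin n → MvPolynomial (Fin 3) K) :=
  (Matrix.mulVecLin Φ).restrictScalars K

/-- The degree-`d` graded piece of `N = ker φ`. -/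
def Nd (n : ℕ) (a : Fin (n + 2) → ℤ) (Φ : Matrix (Fin n) (Fin (n + 2)) (MvPolynomial (Fin 3) K))
    (d : ℤ) : Submodule K (Fin (n + 2) → MvPolynomial (Fin 3) K) :=
  degPiece (n + 2) a d ⊓ LinearMap.ker (phiK n Φ)

/-- The image of the degree-`d` piece of `F` inside the degree-`d` piece of `G`,
viewed as a subspace of the latter. -/
def MdSub (n : ℕ) (a : Fin (n + 2) → ℤ) (b : Fin n → ℤ)
    (Φ : Matrix (Fin n) (Fin (n + 2)) (MvPolynomial (Fin 3) K)) (d : ℤ) :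
    Submodule K ↥(degPiece (K := K) n b d) :=
  Submodule.comap (degPiece (K := K) n b d).subtype
    (Submodule.map (phiK n Φ) (degPiece (n + 2) a d))

/-- The degree-`d` graded piece of `M = coker φ`. -/
abbrev Md (n : ℕ) (a : Fin (n + 2) → ℤ) (b : Fin n → ℤ)
    (Φ : Matrix (Fin n) (Fin (n + 2)) (MvPolynomial (Fin 3) K)) (d : ℤ) :=
  ↥(degPiece (K := K) n b d) ⧸ MdSub n a b Φ d

/-- Multiplication by `L` on tuples of polynomials, as a `K`-linear map. -/
def mulL (N : ℕ) (L : MvPolynomial (Fin 3) K) :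
    (Fin N → MvPolynomial (Fin 3) K) →ₗ[K] (Fin N → MvPolynomial (Fin 3) K) :=
  ((LinearMap.lsmul (MvPolynomial (Fin 3) K) (Fin N → MvPolynomial (Fin 3) K)) L).restrictScalars K

lemma mulL_apply {N : ℕ} (L : MvPolynomial (Fin 3) K) (v : Fin N → MvPolynomial (Fin 3) K) :
    mulL N L v = L • v := rfl

lemma mulL_mem {N : ℕ} {a : Fin N → ℤ} {L : MvPolynomial (Fin 3) K} (hL : homog L 1)
    {d : ℤ} {v : Fin N → MvPolynomial (Fin 3) K} (hv : v ∈ degPiece (K := K) N a (d - 1)) :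
    mulL N L v ∈ degPiece (K := K) N a d := by
  rw [mem_degPiece] at hv ⊢
  intro i
  have h := hL.mul (hv i)
  have e : (1 : ℤ) + (d - 1 - a i) = d - a i := by ring
  rw [e] at h
  simpa [mulL_apply, smul_eq_mul, homog] using h

/-- Multiplication by `L` from the degree-`d-1` piece of `G` to the degree-`d` piece. -/
def mulLres (n : ℕ) (b : Fin n → ℤ) (L : MvPolynomial (Fin 3) K) (hL : homog L 1) (d : ℤ) :
    ↥(degPiece (K := K) n b (d - 1)) →ₗ[K] ↥(degPiece (K := K) n b d) :=
  (mulL n L).restrict fun _ hv => mulL_mem hL hv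

lemma mulLres_comap (n : ℕ) (a : Fin (n + 2) → ℤ) (b : Fin n → ℤ)
    (Φ : Matrix (Fin n) (Fin (n + 2)) (MvPolynomial (Fin 3) K))
    (L : MvPolynomial (Fin 3) K) (hL : homog L 1) (d : ℤ) :
    MdSub n a b Φ (d - 1) ≤ Submodule.comap (mulLres n b L hL d) (MdSub n a b Φ d) := by
  rintro ⟨w, hw⟩ hmem
  obtain ⟨v, hv, hφv⟩ := hmem
  refine ⟨mulL (n + 2) L v, mulL_mem hL hv, ?_⟩
  show phiK n Φ (mulL (n + 2) L v) = ((mulLres n b L hL d) ⟨w, hw⟩ : Fin n → MvPolynomial (Fin 3) K)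
  have : phiK n Φ (mulL (n + 2) L v) = L • phiK n Φ v := by
    simp [phiK, mulL_apply]
  rw [this, hφv]
  rfl

/-- The map induced by multiplication by `L` from `M_{d-1}` to `M_d`,
where `M = coker φ`. -/
def mulLmap (n : ℕ) (a : Fin (n + 2) → ℤ) (b : Fin n → ℤ)
    (Φ : Matrix (Fin n) (Fin (n + 2)) (MvPolynomial (Fin 3) K))
    (L : MvPolynomial (Fin 3) K) (hL : homog L 1) (d : ℤ) :
    Md n a b Φ (d - 1) →ₗ[K] Md n a b Φ d :=
  Submodule.mapQ (MdSub n a b Φ (d - 1)) (MdSub n a b Φ d) (mulLres n b L hL d)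
    (mulLres_comap n a b Φ L hL d)

/-- The linear form with coefficient vector `c`. -/
def linform (c : Fin 3 → K) : MvPolynomial (Fin 3) K := ∑ i, C (c i) * X i

lemma homog_linform (c : Fin 3 → K) : homog (linform c) 1 := by
  rw [homog, ← mem_weightedHomogeneousSubmodule]
  refine sum_mem fun i _ => ?_
  rw [mem_weightedHomogeneousSubmodule]
  simpa using (isWeightedHomogeneous_C (fun _ : Fin 3 => (1 : ℤ)) (c i)).mul
    (isWeightedHomogeneous_X K (fun _ : Fin 3 => (1 : ℤ)) i)

/-- Finite length of `coker φ`: all sufficiently high graded pieces vanish. -/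
def FiniteColength (n : ℕ) (a : Fin (n + 2) → ℤ) (b : Fin n → ℤ)
    (Φ : Matrix (Fin n) (Fin (n + 2)) (MvPolynomial (Fin 3) K)) : Prop :=
  ∃ D : ℤ, ∀ d : ℤ, D ≤ d →
    degPiece (K := K) n b d ≤ Submodule.map (phiK n Φ) (degPiece (n + 2) a d)

end


/-! ### Generic graded helpers -/

noncomputable section

/-- homogeneous pieces -/
abbrev Wd (σ K : Type*) [Field K] (e : ℤ) : Submodule K (MvPolynomial σ K) :=
  weightedHomogeneousSubmodule K (fun _ : σ => (1 : ℤ)) e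

/-- graded piece of a free module -/
def dP {σ K : Type*} [Field K] (N : ℕ) (a : Fin N → ℤ) (d : ℤ) :
    Submodule K (Fin N → MvPolynomial σ K) :=
  Submodule.pi Set.univ fun i => Wd σ K (d - a i)

lemma mem_dP {σ K : Type*} [Field K] {N : ℕ} {a : Fin N → ℤ} {d : ℤ}
    {v : Fin N → MvPolynomial σ K} :
    v ∈ dP N a d ↔ ∀ i, v i ∈ Wd σ K (d - a i) := by
  simp [dP, Submodule.mem_pi]

lemma wt_eq {σ : Type*} (d : σ →₀ ℕ) :
    Finsupp.weight (fun _ : σ => (1 : ℤ)) d = (d.degree : ℤ) := by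
  rw [Finsupp.weight_apply, Finsupp.degree_apply]
  simp [Finsupp.sum]

lemma comp_mul {σ K : Type*} [Field K] {f : MvPolynomial σ K} {p : ℤ}
    (hf : f ∈ Wd σ K p) (e : ℤ) (g : MvPolynomial σ K) :
    weightedHomogeneousComponent (fun _ : σ => (1 : ℤ)) e (f * g) =
      f * weightedHomogeneousComponent (fun _ : σ => (1 : ℤ)) (e - p) g := by
  classical
  induction g using MvPolynomial.induction_on' with
  | add g h hg hh => rw [mul_add, map_add, hg, hh, map_add, mul_add]
  | monomial d r =>
    have h1 : monomial d r ∈ Wd σ K (Finsupp.weight (fun _ : σ => (1 : ℤ)) d) :=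
      isWeightedHomogeneous_monomial _ _ _ rfl
    have h2 : f * monomial d r ∈ Wd σ K (p + Finsupp.weight (fun _ : σ => (1 : ℤ)) d) :=
      IsWeightedHomogeneous.mul hf h1
    rw [weightedHomogeneousComponent_of_mem h1, weightedHomogeneousComponent_of_mem h2]
    by_cases h : e - p = Finsupp.weight (fun _ : σ => (1 : ℤ)) d
    · rw [if_pos h, if_pos (by omega)]
    · rw [if_neg h, if_neg (by omega), mul_zero]

/-- graded component of a vector -/
def gc {σ K : Type*} [Field K] {N : ℕ} (a : Fin N → ℤ) (d : ℤ)
    (w : Fin N → MvPolynomial σ K) : Fin N → MvPolynomial σ K :=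
  fun i => weightedHomogeneousComponent (fun _ : σ => (1 : ℤ)) (d - a i) (w i)

lemma gc_mem {σ K : Type*} [Field K] {N : ℕ} (a : Fin N → ℤ) (d : ℤ)
    (w : Fin N → MvPolynomial σ K) : gc a d w ∈ dP N a d :=
  mem_dP.2 fun _ => weightedHomogeneousComponent_mem _ _ _

lemma gc_mulVec {σ K : Type*} [Field K] {n N : ℕ} (a : Fin N → ℤ) (b : Fin n → ℤ)
    (Φ : Matrix (Fin n) (Fin N) (MvPolynomial σ K))
    (hΦ : ∀ j i, Φ j i ∈ Wd σ K (a i - b j)) (d : ℤ) (w : Fin N → MvPolynomial σ K) :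
    Φ.mulVec (gc a d w) = gc b d (Φ.mulVec w) := by
  funext j
  simp only [gc, Matrix.mulVec, dotProduct, map_sum]
  refine Finset.sum_congr rfl fun i _ => ?_
  rw [comp_mul (hΦ j i)]
  congr 3
  ring

lemma gc_sum {σ K : Type*} [Field K] {N : ℕ} (a : Fin N → ℤ)
    (w : Fin N → MvPolynomial σ K) : ∃ F : Finset ℤ, w = ∑ d ∈ F, gc a d w := by
  classical
  refine ⟨Finset.univ.biUnion fun i => ((w i).support.image
    fun s => Finsupp.weight (fun _ : σ => (1 : ℤ)) s + a i), ?_⟩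
  funext i
  rw [Finset.sum_apply]
  simp only [gc]
  ext s
  rw [coeff_sum]
  simp only [coeff_weightedHomogeneousComponent]
  by_cases hs : coeff s (w i) = 0
  · simp [hs]
  · rw [Finset.sum_eq_single (Finsupp.weight (fun _ : σ => (1 : ℤ)) s + a i)]
    · simp
    · intro d _ hd
      rw [if_neg]
      omega
    · intro h
      exfalso
      apply h
      rw [Finset.mem_biUnion]
      exact ⟨i, Finset.mem_univ _, Finset.mem_image.2 ⟨s, by simpa using hs, rfl⟩⟩

/-! ### Coprimality -/

lemma dvd_of_coprime {T ι : Type*} [CommRing T] [IsDomain T] [UniqueFactorizationMonoid T]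
    (u : ι → T) (hu : ∀ p : T, Prime p → ∃ i, ¬ p ∣ u i) (hne : ∃ i, u i ≠ 0) (β : T) :
    ∀ α : T, (∀ i, β ∣ α * u i) → β ∣ α := by
  induction β using UniqueFactorizationMonoid.induction_on_prime with
  | h₁ =>
    intro α h
    obtain ⟨i, hi⟩ := hne
    have := zero_dvd_iff.1 (h i)
    rcases mul_eq_zero.1 this with h | h
    · simp [h]
    · exact absurd h hi
  | h₂ x hx => intro α _; exact hx.dvd
  | h₃ a p ha hp ih =>
    intro α h
    obtain ⟨i, hi⟩ := hu p hp
    obtain ⟨α', rfl⟩ : p ∣ α :=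
      (hp.dvd_or_dvd ((Dvd.intro _ rfl).trans (h i))).resolve_right hi
    refine mul_dvd_mul_left p (ih α' fun j => ?_)
    have := h j
    rw [mul_assoc] at this
    exact (mul_dvd_mul_iff_left hp.ne_zero).1 this

/-- minimality implies coprimality -/
lemma coprime_of_minimal {σ K : Type*} [Field K] {n N : ℕ} (a : Fin N → ℤ) (b : Fin n → ℤ)
    (Φ : Matrix (Fin n) (Fin N) (MvPolynomial σ K))
    (hΦ : ∀ j i, Φ j i ∈ Wd σ K (a i - b j)) (d : ℤ) (u : Fin N → MvPolynomial σ K)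
    (hu : u ∈ dP N a d) (hu0 : u ≠ 0) (hk : Φ.mulVec u = 0)
    (hmin : ∀ e < d, ∀ w ∈ dP (σ := σ) (K := K) N a e, Φ.mulVec w = 0 → w = 0)
    (p : MvPolynomial σ K) (hp : Prime p) : ∃ i, ¬ p ∣ u i := by
  classical
  by_contra! hdiv
  choose w hw using hdiv
  have huw : u = p • w := funext fun i => by simp [hw i]
  obtain ⟨i, hi⟩ := Function.ne_iff.1 hu0
  have hwi : w i ≠ 0 := by
    intro h; apply hi; rw [hw i, h]; simp
  have hΦw : Φ.mulVec w = 0 := by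
    rw [huw, Matrix.mulVec_smul] at hk
    exact (smul_eq_zero.1 hk).resolve_left hp.ne_zero
  obtain ⟨s, hs⟩ := exists_coeff_ne_zero hwi
  have hdeg : (u i).totalDegree = p.totalDegree + (w i).totalDegree := by
    rw [hw i, totalDegree_mul_of_isDomain hp.ne_zero hwi]
  have hpdeg : p.totalDegree ≠ 0 := by
    intro h
    have hpC := totalDegree_eq_zero_iff_eq_C.1 h
    apply hp.not_isUnit
    rw [hpC]
    refine IsUnit.map C (isUnit_iff_ne_zero.2 fun h0 => hp.ne_zero ?_)
    rw [hpC, h0, C_0]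
  have hui : ((u i).totalDegree : ℤ) = d - a i := by
    obtain ⟨t, ht, ht'⟩ := Finset.exists_mem_eq_sup (u i).support
      (by simpa using hi) (fun s => s.degree)
    have h1 : (u i).totalDegree = t.degree := by
      rw [← ht']; rfl
    rw [h1, ← wt_eq]
    exact (mem_dP.1 hu i) (mem_support_iff.1 ht)
  have hsd : s.degree ≤ (w i).totalDegree := le_totalDegree (mem_support_iff.2 hs)
  have hz := hmin (s.degree + a i) (by omega) (gc a (s.degree + a i) w) (gc_mem _ _ _) (by
    rw [gc_mulVec a b Φ hΦ, hΦw]; funext j; simp [gc])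
  have := congrArg (coeff s) (congrFun hz i)
  simp only [gc, coeff_weightedHomogeneousComponent, wt_eq] at this
  simp at this
  exact hs this

/-! ### Dimension counts in two variables -/

lemma Wd_card (e : ℤ) : Nonempty ({d : Fin 2 →₀ ℕ | Finsupp.weight (fun _ : Fin 2 => (1 : ℤ)) d = e}
    ≃ Fin (e + 1).toNat) := by
  have key : ∀ d : Fin 2 →₀ ℕ, Finsupp.weight (fun _ : Fin 2 => (1 : ℤ)) d = (d 0 : ℤ) + d 1 := by
    intro d
    rw [wt_eq, Finsupp.degree_eq_sum]
    simp
  refine ⟨⟨fun d => ⟨d.1 0, ?_⟩, fun i => ⟨Finsupp.equivFunOnFinite.symm ![i.1, e.toNat - i.1], ?_⟩,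
    ?_, ?_⟩⟩
  · have := d.2
    simp only [Set.mem_ofPred_eq, key] at this
    omega
  · have := i.2
    simp only [Set.mem_ofPred_eq, key]
    simp
    omega
  · intro d
    have := d.2
    simp only [Set.mem_ofPred_eq, key] at this
    ext i
    fin_cases i <;> simp
    omega
  · intro i
    ext
    simp

lemma finrank_Wd (K : Type*) [Field K] (e : ℤ) :
    Module.Finite K (Wd (Fin 2) K e) ∧ Module.finrank K (Wd (Fin 2) K e) = (e + 1).toNat := by
  obtain ⟨E⟩ := Wd_card e
  have E' : Wd (Fin 2) K e ≃ₗ[K] (Fin (e + 1).toNat →₀ K) := by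
    rw [Wd, weightedHomogeneousSubmodule_eq_finsupp_supported]
    exact (AddMonoidAlgebra.supportedEquivFinsupp _) ≪≫ₗ Finsupp.domLCongr E
  refine ⟨Module.Finite.equiv E'.symm, ?_⟩
  rw [E'.finrank_eq]
  simp

instance finiteWd (K : Type*) [Field K] (e : ℤ) : Module.Finite K (Wd (Fin 2) K e) :=
  (finrank_Wd K e).1

/-- pi equivalence -/
def dPEquiv {σ K : Type*} [Field K] (N : ℕ) (a : Fin N → ℤ) (d : ℤ) :
    dP (σ := σ) (K := K) N a d ≃ₗ[K] (∀ i, Wd σ K (d - a i)) where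
  toFun v i := ⟨v.1 i, mem_dP.1 v.2 i⟩
  invFun f := ⟨fun i => (f i).1, mem_dP.2 fun i => (f i).2⟩
  map_add' _ _ := rfl
  map_smul' _ _ := rfl
  left_inv _ := rfl
  right_inv _ := rfl

instance finitedP (K : Type*) [Field K] (N : ℕ) (a : Fin N → ℤ) (d : ℤ) :
    Module.Finite K (dP (σ := Fin 2) (K := K) N a d) :=
  Module.Finite.equiv (dPEquiv N a d).symm

lemma finrank_dP (K : Type*) [Field K] (N : ℕ) (a : Fin N → ℤ) (d : ℤ) :
    Module.finrank K (dP (σ := Fin 2) (K := K) N a d) = ∑ i, (d - a i + 1).toNat := by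
  rw [(dPEquiv N a d).finrank_eq, Module.finrank_pi_fintype]
  exact Finset.sum_congr rfl fun i _ => (finrank_Wd K _).2

end

/-! ### The main argument over `K[s,t]` -/

noncomputable section

lemma rank_null {K V V' : Type*} [Field K] [AddCommGroup V] [Module K V] [AddCommGroup V']
    [Module K V'] (f : V →ₗ[K] V') (p : Submodule K V) [Module.Finite K p] :
    Module.finrank K (p.map f) + Module.finrank K (p ⊓ LinearMap.ker f : Submodule K V) =
      Module.finrank K p := by
  have h := LinearMap.finrank_range_add_finrank_ker (f.domRestrict p)
  have h1 : LinearMap.range (f.domRestrict p) = p.map f := by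
    ext x; simp
  have h2 : (LinearMap.ker (f.domRestrict p)).map p.subtype = p ⊓ LinearMap.ker f := by
    ext x; simp [and_comm]
  rw [← h2, Submodule.finrank_map_subtype_eq, ← h1, h]

/-- the map given by a matrix, over the field -/
def phT {σ K : Type*} [Field K] {n N : ℕ} (Ψ : Matrix (Fin n) (Fin N) (MvPolynomial σ K)) :
    (Fin N → MvPolynomial σ K) →ₗ[K] (Fin n → MvPolynomial σ K) :=
  (Matrix.mulVecLin Ψ).restrictScalars K

lemma phT_apply {σ K : Type*} [Field K] {n N : ℕ}
    (Ψ : Matrix (Fin n) (Fin N) (MvPolynomial σ K)) (w : Fin N → MvPolynomial σ K) :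
    phT Ψ w = Ψ.mulVec w := rfl

/-- graded piece of the kernel -/
def kerd {σ K : Type*} [Field K] {n N : ℕ} (a : Fin N → ℤ)
    (Ψ : Matrix (Fin n) (Fin N) (MvPolynomial σ K)) (d : ℤ) :
    Submodule K (Fin N → MvPolynomial σ K) := dP N a d ⊓ LinearMap.ker (phT Ψ)

lemma mem_kerd {σ K : Type*} [Field K] {n N : ℕ} {a : Fin N → ℤ}
    {Ψ : Matrix (Fin n) (Fin N) (MvPolynomial σ K)} {d : ℤ} {w : Fin N → MvPolynomial σ K} :
    w ∈ kerd a Ψ d ↔ w ∈ dP N a d ∧ Ψ.mulVec w = 0 := Iff.rfl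

instance finite_kerd {K : Type*} [Field K] {n N : ℕ} (a : Fin N → ℤ)
    (Ψ : Matrix (Fin n) (Fin N) (MvPolynomial (Fin 2) K)) (d : ℤ) :
    Module.Finite K (kerd a Ψ d) :=
  Submodule.finiteDimensional_of_le (inf_le_left : kerd a Ψ d ≤ dP N a d)

lemma X0_dvd {K : Type*} [Field K] {p : MvPolynomial (Fin 2) K} {e : ℤ}
    (hp : p ∈ Wd (Fin 2) K e) (h0 : eval ![0, 1] p = 0) : X 0 ∣ p := by
  classical
  have key : ∀ d ∈ p.support, d 0 ≠ 0 := by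
    intro d hd hd0
    have hwd : ∀ d ∈ p.support, (d 0 : ℤ) + d 1 = e := by
      intro d hd
      have := hp (mem_support_iff.1 hd)
      rw [wt_eq, Finsupp.degree_eq_sum] at this
      simpa using this
    rw [eval_eq, Finset.sum_eq_single d] at h0
    · rw [Finset.prod_eq_one, mul_one] at h0
      · exact mem_support_iff.1 hd h0
      · intro i _
        fin_cases i
        · simp [hd0]
        · simp
    · intro d' hd' hne
      have h1 := hwd d hd
      have h2 := hwd d' hd'
      have : d' 0 ≠ 0 := by
        intro h
        apply hne
        ext i
        fin_cases i
        · simp [h, hd0]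
        · simp; omega
      rw [Finset.prod_eq_zero (i := 0) (Finsupp.mem_support_iff.2 this) (by simp [this]), mul_zero]
    · intro h; exact absurd hd h
  rw [p.as_sum]
  refine Finset.dvd_sum fun d hd => ?_
  rw [X, monomial_dvd_monomial]
  refine ⟨Or.inr ?_, one_dvd _⟩
  simpa [Nat.one_le_iff_ne_zero] using key d hd

lemma X_mul_mem {σ K : Type*} [Field K] {p : MvPolynomial σ K} {e : ℤ} (i : σ)
    (hp : X i * p ∈ Wd σ K e) : p ∈ Wd σ K (e - 1) := by
  intro d hd
  have := @hp (Finsupp.single i 1 + d) (by rwa [coeff_X_mul])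
  rw [map_add, Finsupp.weight_single] at this
  simp only [one_smul] at this
  omega

lemma kerd_step {K : Type*} [Field K] {n : ℕ} (a : Fin (n + 2) → ℤ)
    (Ψ : Matrix (Fin n) (Fin (n + 2)) (MvPolynomial (Fin 2) K))
    (hsurj : Function.Surjective (Ψ.map (eval ![(0 : K), 1])).mulVecLin) (d : ℤ) :
    Module.finrank K (kerd a Ψ d) ≤ Module.finrank K (kerd a Ψ (d - 1)) + 2 := by
  let ev : (Fin (n + 2) → MvPolynomial (Fin 2) K) →ₗ[K] (Fin (n + 2) → K) :=
    LinearMap.pi fun i => (aeval ![(0 : K), 1]).toLinearMap ∘ₗ LinearMap.proj i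
  have hev : ∀ w i, ev w i = eval ![(0 : K), 1] (w i) := fun w i => by
    simp [ev, aeval_eq_eval]
  have hrn := rank_null ev (kerd a Ψ d)
  set A := Ψ.map (eval ![(0 : K), 1]) with hA
  have h1 : (kerd a Ψ d).map ev ≤ LinearMap.ker A.mulVecLin := by
    rintro _ ⟨w, hw, rfl⟩
    rw [LinearMap.mem_ker, Matrix.mulVecLin_apply]
    have := (mem_kerd.1 hw).2
    funext j
    have h2 := congrArg (eval ![(0 : K), 1]) (congrFun this j)
    simpa [Matrix.mulVec, dotProduct, hA, hev] using h2
  have h2 : Module.finrank K (LinearMap.ker A.mulVecLin) = 2 := by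
    have := LinearMap.finrank_range_add_finrank_ker A.mulVecLin
    rw [LinearMap.range_eq_top.2 hsurj, finrank_top] at this
    simp at this
    omega
  have h3 := Submodule.finrank_mono h1
  let mx : (Fin (n + 2) → MvPolynomial (Fin 2) K) →ₗ[K] (Fin (n + 2) → MvPolynomial (Fin 2) K) :=
    (LinearMap.lsmul (MvPolynomial (Fin 2) K) _ (X 0)).restrictScalars K
  have h4 : kerd a Ψ d ⊓ LinearMap.ker ev ≤ (kerd a Ψ (d - 1)).map mx := by
    rintro w ⟨hw, hwe⟩
    have hw' := mem_kerd.1 hw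
    have : ∀ i, X 0 ∣ w i := fun i => by
      refine X0_dvd (mem_dP.1 hw'.1 i) ?_
      rw [← hev]
      have := LinearMap.mem_ker.1 hwe
      rw [this]; rfl
    choose w' hw'' using this
    have e : w = (X 0 : MvPolynomial (Fin 2) K) • w' := funext fun i => by simp [hw'' i]
    refine ⟨w', mem_kerd.2 ⟨mem_dP.2 fun i => ?_, ?_⟩, e.symm⟩
    · have := mem_dP.1 hw'.1 i
      rw [hw'' i] at this
      have := X_mul_mem 0 this
      rwa [show d - 1 - a i = d - a i - 1 by ring]
    · have := hw'.2
      rw [e, Matrix.mulVec_smul] at this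
      exact (smul_eq_zero.1 this).resolve_left (X_ne_zero _)
  have h5 := (Submodule.finrank_mono h4).trans (Submodule.finrank_map_le _ _)
  omega

lemma phT_mem {σ K : Type*} [Field K] {n N : ℕ} {a : Fin N → ℤ} {b : Fin n → ℤ}
    {Ψ : Matrix (Fin n) (Fin N) (MvPolynomial σ K)}
    (hΨ : ∀ j i, Ψ j i ∈ Wd σ K (a i - b j)) {d : ℤ} {w : Fin N → MvPolynomial σ K}
    (hw : w ∈ dP N a d) : Ψ.mulVec w ∈ dP n b d := by
  refine mem_dP.2 fun j => ?_
  rw [Matrix.mulVec, dotProduct]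
  refine sum_mem fun i _ => ?_
  have := IsWeightedHomogeneous.mul (hΨ j i) (mem_dP.1 hw i)
  rwa [show a i - b j + (d - a i) = d - b j by ring] at this

lemma kerd_large {K : Type*} [Field K] {n : ℕ} (a : Fin (n + 2) → ℤ) (b : Fin n → ℤ)
    (Ψ : Matrix (Fin n) (Fin (n + 2)) (MvPolynomial (Fin 2) K))
    (hΨ : ∀ j i, Ψ j i ∈ Wd (Fin 2) K (a i - b j))
    (hfin : ∃ D : ℤ, ∀ d : ℤ, D ≤ d → dP n b d ≤ Submodule.map (phT Ψ) (dP (n + 2) a d))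
    (m : ℤ) (hm : (∑ i, a i) - (∑ j, b j) = 2 * m) :
    ∃ D : ℤ, ∀ d : ℤ, D ≤ d → (Module.finrank K (kerd a Ψ d) : ℤ) = 2 * d + 2 - 2 * m := by
  obtain ⟨D, hD⟩ := hfin
  refine ⟨|D| + ∑ i, |a i| + ∑ j, |b j|, fun d hd => ?_⟩
  have ha0 : 0 ≤ ∑ i, |a i| := Finset.sum_nonneg fun i _ => abs_nonneg _
  have hb0 : 0 ≤ ∑ j, |b j| := Finset.sum_nonneg fun i _ => abs_nonneg _
  have hDd : D ≤ d := by have := le_abs_self D; omega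
  have hD0 := abs_nonneg D
  have ha : ∀ i, a i ≤ d := fun i => by
    have h1 := Finset.single_le_sum (f := fun i => |a i|) (fun i _ => abs_nonneg _)
      (Finset.mem_univ i)
    have h2 := le_abs_self (a i)
    omega
  have hb : ∀ i, b i ≤ d := fun i => by
    have h1 := Finset.single_le_sum (f := fun i => |b i|) (fun i _ => abs_nonneg _)
      (Finset.mem_univ i)
    have h2 := le_abs_self (b i)
    omega
  have hrn := rank_null (phT Ψ) (dP (n + 2) a d)
  have himg : (dP (n + 2) a d).map (phT Ψ) = dP n b d := by
    refine le_antisymm ?_ (hD d hDd)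
    rintro _ ⟨w, hw, rfl⟩
    exact phT_mem hΨ hw
  rw [himg, finrank_dP, finrank_dP] at hrn
  have hrn' := congrArg (fun x : ℕ => (x : ℤ)) hrn
  simp only [Nat.cast_add, Nat.cast_sum] at hrn'
  rw [Finset.sum_congr rfl (g := fun j => d + 1 - b j)
      (fun j _ => by have := hb j; omega),
    Finset.sum_congr rfl (s₁ := Finset.univ (α := Fin (n + 2))) (g := fun j => d + 1 - a j)
      (fun j _ => by have := ha j; omega)] at hrn'
  simp only [Finset.sum_sub_distrib, Finset.sum_const, Finset.card_univ, Fintype.card_fin,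
    nsmul_eq_mul] at hrn'
  push_cast at hrn'
  change (n : ℤ) * (d + 1) - ∑ j, b j + (Module.finrank K (kerd a Ψ d) : ℤ) = _ at hrn'
  linarith

lemma surj_eval {K : Type*} [Field K] {n : ℕ} (a : Fin (n + 2) → ℤ) (b : Fin n → ℤ)
    (Ψ : Matrix (Fin n) (Fin (n + 2)) (MvPolynomial (Fin 2) K))
    (hfin : ∃ D : ℤ, ∀ d : ℤ, D ≤ d → dP n b d ≤ Submodule.map (phT Ψ) (dP (n + 2) a d)) :
    Function.Surjective (Ψ.map (eval ![(0 : K), 1])).mulVecLin := by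
  obtain ⟨D, hD⟩ := hfin
  intro y
  have hb0 : ∀ j, b j ≤ ∑ j, |b j| := fun j =>
    (le_abs_self _).trans
      (Finset.single_le_sum (f := fun i => |b i|) (fun i _ => abs_nonneg _) (Finset.mem_univ j))
  set d := |D| + ∑ j, |b j| with hd
  have hD1 := abs_nonneg D
  have hD2 := le_abs_self D
  have hs : 0 ≤ ∑ j, |b j| := Finset.sum_nonneg fun i _ => abs_nonneg _
  have hmem : (fun j => C (y j) * X 1 ^ (d - b j).toNat : Fin n → MvPolynomial (Fin 2) K)
      ∈ dP n b d := by
    refine mem_dP.2 fun j => ?_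
    have h1 := (isWeightedHomogeneous_X K (fun _ : Fin 2 => (1 : ℤ)) 1).pow (d - b j).toNat
    have h2 := h1.C_mul (y j)
    have h3 := hb0 j
    rw [mem_weightedHomogeneousSubmodule]
    convert h2 using 1
    simp
    omega
  obtain ⟨w, -, hw⟩ := hD d (by omega) hmem
  refine ⟨fun i => eval ![0, 1] (w i), ?_⟩
  funext j
  have h2 := congrArg (eval ![(0 : K), 1]) (congrFun hw j)
  simpa [phT_apply, Matrix.mulVec, dotProduct] using h2

lemma smul_mem_dP {σ K : Type*} [Field K] {N : ℕ} {a : Fin N → ℤ} {d e f : ℤ}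
    {r : MvPolynomial σ K} {w : Fin N → MvPolynomial σ K} (hr : r ∈ Wd σ K e) (hw : w ∈ dP N a d)
    (hf : f = e + d) : r • w ∈ dP N a f := by
  subst hf
  refine mem_dP.2 fun i => ?_
  have := IsWeightedHomogeneous.mul hr (mem_dP.1 hw i)
  rwa [show e + (d - a i) = e + d - a i by ring] at this

lemma smul_mem_kerd {σ K : Type*} [Field K] {n N : ℕ} {a : Fin N → ℤ}
    {Ψ : Matrix (Fin n) (Fin N) (MvPolynomial σ K)} {d e f : ℤ}
    {r : MvPolynomial σ K} {w : Fin N → MvPolynomial σ K} (hr : r ∈ Wd σ K e)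
    (hw : w ∈ kerd a Ψ d) (hf : f = e + d) : r • w ∈ kerd a Ψ f := by
  have := mem_kerd.1 hw
  exact mem_kerd.2 ⟨smul_mem_dP hr this.1 hf, by rw [Matrix.mulVec_smul, this.2, smul_zero]⟩

theorem main_two {K : Type*} [Field K] {n : ℕ} (a : Fin (n + 2) → ℤ) (b : Fin n → ℤ)
    (Ψ : Matrix (Fin n) (Fin (n + 2)) (MvPolynomial (Fin 2) K))
    (hΨ : ∀ j i, Ψ j i ∈ Wd (Fin 2) K (a i - b j))
    (hfin : ∃ D : ℤ, ∀ d : ℤ, D ≤ d → dP n b d ≤ Submodule.map (phT Ψ) (dP (n + 2) a d))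
    (m : ℤ) (hm : (∑ i, a i) - (∑ j, b j) = 2 * m) (k : ℤ) (hk : 0 < k)
    (u : Fin (n + 2) → MvPolynomial (Fin 2) K) (hu : u ∈ dP (n + 2) a (m - k))
    (hΨu : Ψ.mulVec u = 0) (hu0 : u ≠ 0)
    (hcop : ∀ p : MvPolynomial (Fin 2) K, Prime p → ∃ i, ¬ p ∣ u i) :
    ∃ v ∈ dP (n + 2) a (m + k), Ψ.mulVec v = 0 ∧ ∀ w, Ψ.mulVec w = 0 →
      ∃! rs : MvPolynomial (Fin 2) K × MvPolynomial (Fin 2) K, w = rs.1 • u + rs.2 • v := by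
  classical
  have hsurj := surj_eval a b Ψ hfin
  obtain ⟨D, hD⟩ := kerd_large a b Ψ hΨ hfin m hm
  -- lower bound
  have hlow : ∀ d : ℤ, 2 * d + 2 - 2 * m ≤ (Module.finrank K (kerd a Ψ d) : ℤ) := by
    intro d
    have key : ∀ j : ℕ, (Module.finrank K (kerd a Ψ (d + j)) : ℤ) ≤
        Module.finrank K (kerd a Ψ d) + 2 * j := by
      intro j
      induction j with
      | zero =>
        have h0 : d + ((0 : ℕ) : ℤ) = d := by simp
        rw [h0]
        simp
      | succ j ih =>
        have h := kerd_step a Ψ hsurj (d + (j + 1 : ℕ))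
        rw [show d + ((j + 1 : ℕ) : ℤ) - 1 = d + j by push_cast; ring] at h
        push_cast at h ⊢
        omega
    have h1 := key (D - d).toNat
    rw [hD _ (by omega)] at h1
    omega
  obtain ⟨i₀, hi₀⟩ := Function.ne_iff.1 hu0
  -- existence of v
  let mu : MvPolynomial (Fin 2) K →ₗ[K] (Fin (n + 2) → MvPolynomial (Fin 2) K) :=
    (LinearMap.toSpanSingleton (MvPolynomial (Fin 2) K) _ u).restrictScalars K
  have hmu : ∀ r, mu r = r • u := fun r => rfl
  obtain ⟨v, hv, hvu⟩ : ∃ v ∈ kerd a Ψ (m + k), v ∉ (Wd (Fin 2) K (2 * k)).map mu := by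
    by_contra! h
    have h1 : kerd a Ψ (m + k) ≤ (Wd (Fin 2) K (2 * k)).map mu := h
    have h2 := (Submodule.finrank_mono h1).trans (Submodule.finrank_map_le _ _)
    rw [(finrank_Wd K _).2] at h2
    have h3 := hlow (m + k)
    omega
  have hv' := mem_kerd.1 hv
  -- independence
  have hind : ∀ α β : MvPolynomial (Fin 2) K, α • u + β • v = 0 → α = 0 ∧ β = 0 := by
    intro α β h
    by_cases hβ : β = 0
    · subst hβ
      rw [zero_smul, add_zero] at h
      exact ⟨(smul_eq_zero.1 h).resolve_right hu0, rfl⟩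
    · exfalso
      have hdiv : β ∣ α := by
        refine dvd_of_coprime u hcop ⟨i₀, hi₀⟩ β α fun i => ?_
        refine ⟨-v i, ?_⟩
        have := congrFun h i
        simp only [Pi.add_apply, Pi.smul_apply, smul_eq_mul, Pi.zero_apply] at this
        linear_combination this
      obtain ⟨γ, rfl⟩ := hdiv
      rw [mul_smul, ← smul_add] at h
      have h2 := (smul_eq_zero.1 h).resolve_left hβ
      apply hvu
      refine ⟨weightedHomogeneousComponent (fun _ : Fin 2 => (1 : ℤ)) (2 * k) (-γ),
        weightedHomogeneousComponent_mem _ _ _, ?_⟩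
      rw [hmu]
      funext i
      have h3 : u i * (-γ) = v i := by
        have := congrFun h2 i
        simp only [Pi.add_apply, Pi.smul_apply, smul_eq_mul, Pi.zero_apply] at this
        linear_combination -this
      have h4 := comp_mul (mem_dP.1 hu i) (m + k - a i) (-γ)
      rw [h3, weightedHomogeneousComponent_eq_self (mem_dP.1 hv'.1 i),
        show m + k - a i - (m - k - a i) = 2 * k by ring] at h4
      rw [h4]
      simp [mul_comm]
  -- large degrees
  have hukd : u ∈ kerd a Ψ (m - k) := mem_kerd.2 ⟨hu, hΨu⟩
  have hlarge : ∀ d : ℤ, D ≤ d → m + k ≤ d → ∀ w ∈ kerd a Ψ d,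
      ∃ r s : MvPolynomial (Fin 2) K, w = r • u + s • v := by
    intro d hd hd' w hw
    let g : (Wd (Fin 2) K (d - (m - k)) × Wd (Fin 2) K (d - (m + k))) →ₗ[K]
        (Fin (n + 2) → MvPolynomial (Fin 2) K) :=
      LinearMap.coprod (mu ∘ₗ Submodule.subtype _)
        (((LinearMap.toSpanSingleton (MvPolynomial (Fin 2) K) _ v).restrictScalars K) ∘ₗ
          Submodule.subtype _)
    have hg : ∀ x, g x = x.1.1 • u + x.2.1 • v := fun x => rfl
    have hginj : Function.Injective g := by
      rw [← LinearMap.ker_eq_bot, LinearMap.ker_eq_bot']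
      intro x hx
      rw [hg] at hx
      obtain ⟨h1, h2⟩ := hind _ _ hx
      exact Prod.ext (Subtype.ext h1) (Subtype.ext h2)
    have hle : LinearMap.range g ≤ kerd a Ψ d := by
      rintro _ ⟨x, rfl⟩
      rw [hg]
      exact add_mem (smul_mem_kerd x.1.2 hukd (by ring)) (smul_mem_kerd x.2.2 hv (by ring))
    have heq : LinearMap.range g = kerd a Ψ d := by
      refine Submodule.eq_of_le_of_finrank_eq hle ?_
      rw [LinearMap.finrank_range_of_inj hginj, Module.finrank_prod, (finrank_Wd K _).2,
        (finrank_Wd K _).2]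
      have := hD d hd
      omega
    rw [← heq] at hw
    obtain ⟨x, rfl⟩ := hw
    exact ⟨_, _, hg x⟩
  have hXp : ∀ (i : Fin 2) (N : ℕ), (X i : MvPolynomial (Fin 2) K) ^ N ∈ Wd (Fin 2) K N := by
    intro i N
    have := (isWeightedHomogeneous_X K (fun _ : Fin 2 => (1 : ℤ)) i).pow N
    simpa using this
  -- all degrees
  have hall : ∀ d : ℤ, ∀ w ∈ kerd a Ψ d,
      ∃ r s : MvPolynomial (Fin 2) K, w = r • u + s • v := by
    intro d w hw
    obtain ⟨N, hN1, hN2⟩ : ∃ N : ℕ, D ≤ N + d ∧ m + k ≤ N + d :=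
      ⟨(D - d).toNat + (m + k - d).toNat, by omega, by omega⟩
    obtain ⟨r, s, h0⟩ := hlarge (N + d) hN1 hN2 _ (smul_mem_kerd (hXp 0 N) hw rfl)
    obtain ⟨r', s', h1⟩ := hlarge (N + d) hN1 hN2 _ (smul_mem_kerd (hXp 1 N) hw rfl)
    have hcomb : (X 1 ^ N * r - X 0 ^ N * r') • u + (X 1 ^ N * s - X 0 ^ N * s') • v = 0 := by
      have e1 : (X 1 : MvPolynomial (Fin 2) K) ^ N • ((X 0 : MvPolynomial (Fin 2) K) ^ N • w) =
        (X 0 : MvPolynomial (Fin 2) K) ^ N • ((X 1 : MvPolynomial (Fin 2) K) ^ N • w) :=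
        smul_comm _ _ _
      rw [h0, h1, ← sub_eq_zero] at e1
      rw [← e1]
      simp only [sub_smul, mul_smul, smul_add]
      abel
    obtain ⟨e1, e2⟩ := hind _ _ hcomb
    have hnd : ¬ (X 0 : MvPolynomial (Fin 2) K) ∣ X 1 ^ N := by
      intro h
      have := (X_prime (R := K) (i := (0 : Fin 2))).dvd_of_dvd_pow h
      rw [X_dvd_X] at this
      exact absurd this (by decide)
    have hq : ∀ r r' : MvPolynomial (Fin 2) K, X 1 ^ N * r - X 0 ^ N * r' = 0 →
        ∃ t, r = X 0 ^ N * t := fun r r' h =>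
      (X_prime (R := K) (i := (0 : Fin 2))).pow_dvd_of_dvd_mul_left N hnd ⟨r', sub_eq_zero.1 h⟩
    obtain ⟨t, rfl⟩ := hq _ _ e1
    obtain ⟨t', rfl⟩ := hq _ _ e2
    refine ⟨t, t', ?_⟩
    rw [mul_smul, mul_smul, ← smul_add] at h0
    exact smul_right_injective _ (pow_ne_zero N (X_ne_zero (R := K) (0 : Fin 2))) h0
  refine ⟨v, hv'.1, hv'.2, fun w hw => ?_⟩
  have hex : ∃ r s : MvPolynomial (Fin 2) K, w = r • u + s • v := by
    obtain ⟨F, hF⟩ := gc_sum a w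
    have : ∀ d, ∃ r s : MvPolynomial (Fin 2) K, gc a d w = r • u + s • v := fun d =>
      hall d _ (mem_kerd.2 ⟨gc_mem _ _ _, by
        rw [gc_mulVec a b Ψ hΨ, hw]; funext j; simp [gc]⟩)
    choose r s hrs using this
    refine ⟨∑ d ∈ F, r d, ∑ d ∈ F, s d, ?_⟩
    rw [Finset.sum_smul, Finset.sum_smul, ← Finset.sum_add_distrib]
    exact hF.trans (Finset.sum_congr rfl fun d _ => hrs d)
  obtain ⟨r, s, hrs⟩ := hex
  refine ⟨(r, s), hrs, ?_⟩
  rintro ⟨r', s'⟩ h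
  simp only at h
  have : (r' - r) • u + (s' - s) • v = 0 := by
    have e := h.symm.trans hrs
    rw [← sub_eq_zero] at e
    rw [← e]
    simp only [sub_smul]
    abel
  obtain ⟨e1, e2⟩ := hind _ _ this
  rw [Prod.mk.injEq]
  exact ⟨sub_eq_zero.1 e1, sub_eq_zero.1 e2⟩

end

/-! ### Restriction to a general line -/

noncomputable section

lemma map_homog {σ τ K : Type*} [Field K] (f : MvPolynomial σ K →ₐ[K] MvPolynomial τ K)
    (hf : ∀ i, f (X i) ∈ Wd τ K 1) {p : MvPolynomial σ K} {e : ℤ} (hp : p ∈ Wd σ K e) :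
    f p ∈ Wd τ K e := by
  rw [p.as_sum, map_sum]
  refine sum_mem fun d hd => ?_
  have hwt := hp (mem_support_iff.1 hd)
  rw [monomial_eq, map_mul, Finsupp.prod, map_prod, ← algebraMap_eq, AlgHom.commutes,
    algebraMap_eq, mem_weightedHomogeneousSubmodule]
  refine IsWeightedHomogeneous.C_mul ?_ _
  have := IsWeightedHomogeneous.prod (w := fun _ : τ => (1 : ℤ)) d.support
    (fun i => f (X i ^ d i)) (fun i => (d i : ℤ)) (fun i _ => by
      rw [map_pow]
      simpa using IsWeightedHomogeneous.pow (hf i) (d i))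
  convert this using 1
  rw [← hwt, wt_eq, Finsupp.degree_apply]
  push_cast
  rfl

/-- restriction to the line `linform c = 0`, where `c 0 ≠ 0` -/
def psi {K : Type*} [Field K] (c : Fin 3 → K) :
    MvPolynomial (Fin 3) K →ₐ[K] MvPolynomial (Fin 2) K :=
  aeval ![-(C (c 1 / c 0) * X 0 + C (c 2 / c 0) * X 1), X 0, X 1]

/-- section of `psi` -/
def iot (K : Type*) [Field K] : MvPolynomial (Fin 2) K →ₐ[K] MvPolynomial (Fin 3) K :=
  aeval ![X 1, X 2]

lemma psi_iot {K : Type*} [Field K] (c : Fin 3 → K) (p : MvPolynomial (Fin 2) K) :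
    psi c (iot K p) = p := by
  have : (psi c).comp (iot K) = AlgHom.id K _ := by
    ext i : 1
    fin_cases i <;> simp [psi, iot]
  exact DFunLike.congr_fun this p

lemma psi_linform {K : Type*} [Field K] (c : Fin 3 → K) (hc : c 0 ≠ 0) :
    psi c (linform c) = 0 := by
  have h1 : (C (c 0) : MvPolynomial (Fin 2) K) * C (c 1 / c 0) = C (c 1) := by
    rw [← C_mul]; congr 1; field_simp
  have h2 : (C (c 0) : MvPolynomial (Fin 2) K) * C (c 2 / c 0) = C (c 2) := by
    rw [← C_mul]; congr 1; field_simp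
  simp only [linform, Fin.sum_univ_three, map_add, map_mul, psi, aeval_X, aeval_C, algebraMap_eq]
  simp only [Matrix.cons_val_zero, Matrix.cons_val_one, Matrix.cons_val]
  linear_combination (-X 0) * h1 - X 1 * h2

lemma iot_psi {K : Type*} [Field K] (c : Fin 3 → K) (hc : c 0 ≠ 0) (p : MvPolynomial (Fin 3) K) :
    iot K (psi c p) - p ∈ Ideal.span {linform c} := by
  have : (Ideal.Quotient.mkₐ K (Ideal.span {linform c})).comp ((iot K).comp (psi c)) =
      Ideal.Quotient.mkₐ K (Ideal.span {linform c}) := by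
    ext i : 1
    simp only [AlgHom.comp_apply, Ideal.Quotient.mkₐ_eq_mk]
    rw [Ideal.Quotient.eq]
    fin_cases i
    · rw [Ideal.mem_span_singleton]
      refine ⟨- C (c 0)⁻¹, ?_⟩
      have h0 : (C (c 0) : MvPolynomial (Fin 3) K) * C (c 0)⁻¹ = 1 := by
        rw [← C_mul, mul_inv_cancel₀ hc, C_1]
      simp only [linform, Fin.sum_univ_three, psi, iot, Fin.zero_eta, aeval_X, map_add, map_neg,
        map_mul, aeval_C, algebraMap_eq, div_eq_mul_inv, Matrix.cons_val_zero,
        Matrix.cons_val_one, Matrix.cons_val]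
      linear_combination (X 0) * h0
    · simp [psi, iot]
    · simp [psi, iot]
  have h := DFunLike.congr_fun this p
  simp only [AlgHom.comp_apply, Ideal.Quotient.mkₐ_eq_mk] at h
  exact Ideal.Quotient.eq.1 h

lemma psi_eq_zero {K : Type*} [Field K] (c : Fin 3 → K) (hc : c 0 ≠ 0)
    (p : MvPolynomial (Fin 3) K) : psi c p = 0 ↔ p ∈ Ideal.span {linform c} := by
  constructor
  · intro h
    have := iot_psi c hc p
    rw [h, map_zero, zero_sub] at this
    simpa using this
  · intro h
    obtain ⟨q, rfl⟩ := Ideal.mem_span_singleton.1 h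
    rw [map_mul, psi_linform c hc, zero_mul]

lemma psi_homog {K : Type*} [Field K] (c : Fin 3 → K) {p : MvPolynomial (Fin 3) K} {e : ℤ}
    (hp : p ∈ Wd (Fin 3) K e) : psi c p ∈ Wd (Fin 2) K e := by
  have hX : ∀ i : Fin 2, (X i : MvPolynomial (Fin 2) K) ∈ Wd (Fin 2) K 1 := fun i =>
    isWeightedHomogeneous_X K (fun _ : Fin 2 => (1 : ℤ)) i
  refine map_homog _ (fun i => ?_) hp
  fin_cases i
  · simp only [psi, aeval_X]
    refine neg_mem (add_mem ?_ ?_)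
    · exact IsWeightedHomogeneous.C_mul (hX 0) _
    · exact IsWeightedHomogeneous.C_mul (hX 1) _
  · simpa [psi] using hX 0
  · simpa [psi] using hX 1

lemma iot_homog {K : Type*} [Field K] {p : MvPolynomial (Fin 2) K} {e : ℤ}
    (hp : p ∈ Wd (Fin 2) K e) : iot K p ∈ Wd (Fin 3) K e := by
  have hX : ∀ i : Fin 3, (X i : MvPolynomial (Fin 3) K) ∈ Wd (Fin 3) K 1 := fun i =>
    isWeightedHomogeneous_X K (fun _ : Fin 3 => (1 : ℤ)) i
  refine map_homog _ (fun i => ?_) hp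
  fin_cases i
  · simpa [iot] using hX 1
  · simpa [iot] using hX 2

lemma eval_linform {K : Type*} [Field K] (c e : Fin 3 → K) :
    eval c (linform e) = ∑ i, e i * c i := by
  simp [linform]

lemma linform_single {K : Type*} [Field K] (i : Fin 3) :
    linform (Pi.single i (1 : K)) = X i := by
  rw [linform, Finset.sum_eq_single i]
  · simp
  · intro j _ hj; simp [hj]
  · simp

lemma avoid_prime {K : Type*} [Field K] (p : Ideal (MvPolynomial (Fin 3) K))
    (hp : ∃ i, X i ∉ p) :
    ∃ Q : MvPolynomial (Fin 3) K, Q ≠ 0 ∧ ∀ c, linform c ∈ p → eval c Q = 0 := by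
  let W : Submodule K (Fin 3 → K) :=
    { carrier := {c | linform c ∈ p}
      add_mem' := by
        intro x y hx hy
        have : linform (x + y) = linform x + linform y := by
          simp [linform, Finset.sum_add_distrib, add_mul]
        change linform (x + y) ∈ p
        rw [this]; exact add_mem hx hy
      zero_mem' := by
        change linform 0 ∈ p
        simp [linform]
      smul_mem' := by
        intro r x hx
        have : linform (r • x) = C r * linform x := by
          simp [linform, Finset.mul_sum, mul_assoc]
        change linform (r • x) ∈ p
        rw [this]; exact p.mul_mem_left _ hx }
  have hW : W < ⊤ := by
    rw [lt_top_iff_ne_top]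
    intro h
    obtain ⟨i, hi⟩ := hp
    apply hi
    rw [← linform_single]
    have : Pi.single i (1 : K) ∈ W := by rw [h]; trivial
    exact this
  obtain ⟨f, hf0, hf⟩ := Submodule.exists_le_ker_of_lt_top W hW
  have hfe : ∀ c, eval c (linform fun i => f (Pi.single i 1)) = f c := by
    intro c
    rw [eval_linform]
    conv_rhs => rw [pi_eq_sum_univ' c]
    rw [map_sum]
    refine Finset.sum_congr rfl fun i _ => ?_
    rw [map_smul, smul_eq_mul, mul_comm]
  refine ⟨linform fun i => f (Pi.single i 1), ?_, fun c hc => ?_⟩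
  · intro h
    apply hf0
    exact LinearMap.ext fun c => by rw [← hfe, h]; simp
  · rw [hfe]
    exact LinearMap.mem_ker.1 (hf hc)

lemma generic_coprime {K : Type*} [Field K] {N : ℕ} (u : Fin N → MvPolynomial (Fin 3) K)
    (hu0 : u ≠ 0) (hcop : ∀ p : MvPolynomial (Fin 3) K, Prime p → ∃ i, ¬ p ∣ u i) :
    ∃ P : MvPolynomial (Fin 3) K, P ≠ 0 ∧ ∀ c, eval c P ≠ 0 → c 0 ≠ 0 ∧
      ∀ p : MvPolynomial (Fin 2) K, Prime p → ∃ i, ¬ p ∣ psi c (u i) := by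
  classical
  set I := Ideal.span (Set.range u) with hI
  have hfin := Ideal.finite_minimalPrimes_of_isNoetherianRing (MvPolynomial (Fin 3) K) I
  have hQ : ∀ p : Ideal (MvPolynomial (Fin 3) K), ∃ Q : MvPolynomial (Fin 3) K, Q ≠ 0 ∧
      ((∃ i, X i ∉ p) → ∀ c, linform c ∈ p → eval c Q = 0) := by
    intro p
    by_cases hp : ∃ i, X i ∉ p
    · obtain ⟨Q, h1, h2⟩ := avoid_prime p hp
      exact ⟨Q, h1, fun _ => h2⟩
    · exact ⟨1, one_ne_zero, fun h => absurd h hp⟩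
  choose Q hQ0 hQ1 using hQ
  refine ⟨X 0 * ∏ p ∈ hfin.toFinset, Q p,
    mul_ne_zero (X_ne_zero _) (Finset.prod_ne_zero_iff.2 fun p _ => hQ0 p), fun c hc => ?_⟩
  rw [map_mul, eval_X, map_prod] at hc
  have hc0 := left_ne_zero_of_mul hc
  have hcQ := Finset.prod_ne_zero_iff.1 (right_ne_zero_of_mul hc)
  refine ⟨hc0, fun π hπ => ?_⟩
  by_contra! hdiv
  have hπp : (Ideal.span {π}).IsPrime := (Ideal.span_singleton_prime hπ.ne_zero).2 hπ
  set q : Ideal (MvPolynomial (Fin 3) K) := (Ideal.span {π}).comap (psi c) with hq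
  have hqp : q.IsPrime := Ideal.comap_isPrime _ _
  have hqmem : ∀ x, x ∈ q ↔ π ∣ psi c x := fun x => by
    rw [hq, Ideal.mem_comap, Ideal.mem_span_singleton]
  have hLq : linform c ∈ q := by rw [hqmem, psi_linform c hc0]; exact dvd_zero _
  have hIq : I ≤ q := by
    rw [hI, Ideal.span_le]
    rintro _ ⟨i, rfl⟩
    exact (hqmem _).2 (hdiv i)
  obtain ⟨p, hpmin, hpq⟩ := Ideal.exists_minimalPrimes_le hIq
  have hpp : p.IsPrime := hpmin.1.1
  have hIp : I ≤ p := hpmin.1.2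
  -- q does not contain all variables
  have hqX : ∃ i, X i ∉ q := by
    by_contra! h
    have h1 := (hqmem _).1 (h 1)
    have h2 := (hqmem _).1 (h 2)
    simp only [psi, aeval_X, Matrix.cons_val_one, Matrix.cons_val] at h1 h2
    have h3 := (hπ.dvd_prime_iff_associated X_prime).1 h1
    have h4 := h3.symm.dvd.trans h2
    rw [X_dvd_X] at h4
    exact absurd h4 (by decide)
  have hqh : q.height ≤ 2 := by
    have hqs : q = Ideal.span {linform c, iot K π} := by
      apply le_antisymm
      · intro x hx
        obtain ⟨r, hr⟩ := (hqmem _).1 hx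
        have h1 := iot_psi c hc0 x
        rw [hr, map_mul] at h1
        have h2 : x = iot K π * iot K r - (iot K π * iot K r - x) := by ring
        rw [h2]
        refine sub_mem (Ideal.mul_mem_right _ _ (Ideal.subset_span (by simp))) ?_
        exact Ideal.span_mono (by simp) h1
      · rw [Ideal.span_le]
        rintro x (rfl | rfl)
        · exact hLq
        · exact (hqmem _).2 (by rw [psi_iot])
    refine (Ideal.height_le_spanFinrank q hqp.ne_top).trans ?_
    have h1 : q.spanFinrank ≤ 2 := by
      rw [hqs]
      refine (Submodule.spanFinrank_span_le_ncard_of_finite (Set.toFinite _)).trans ?_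
      exact (Set.ncard_insert_le _ _).trans (by simp)
    exact_mod_cast h1
  -- p = q
  have hpeq : p = q := by
    by_contra hne
    have hlt : p < q := lt_of_le_of_ne hpq hne
    have h1 := Ideal.height_add_one_le_of_lt_of_isPrime hlt
    obtain ⟨i₀, hi₀⟩ := Function.ne_iff.1 hu0
    have hpbot : p ≠ ⊥ := by
      intro h
      have : u i₀ ∈ p := hIp (Ideal.subset_span ⟨i₀, rfl⟩)
      rw [h] at this
      exact hi₀ (by simpa using this)
    obtain ⟨x, hxp, hx⟩ := hpp.exists_mem_prime_of_ne_bot hpbot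
    have hxpr : (Ideal.span {x}).IsPrime := (Ideal.span_singleton_prime hx.ne_zero).2 hx
    have hlt2 : Ideal.span {x} < p := by
      refine lt_of_le_of_ne ((Ideal.span_singleton_le_iff_mem _).2 hxp) fun h => ?_
      obtain ⟨i, hi⟩ := hcop x hx
      apply hi
      have : u i ∈ p := hIp (Ideal.subset_span ⟨i, rfl⟩)
      rwa [← h, Ideal.mem_span_singleton] at this
    have hlt3 : (⊥ : Ideal (MvPolynomial (Fin 3) K)) < Ideal.span {x} := by
      rw [bot_lt_iff_ne_bot, Ne, Ideal.span_singleton_eq_bot]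
      exact hx.ne_zero
    have h2 := Ideal.height_add_one_le_of_lt_of_isPrime hlt2
    have h3 := Ideal.height_add_one_le_of_lt_of_isPrime hlt3
    have h4 : (3 : ℕ∞) ≤ 2 := by
      calc (3 : ℕ∞) = 0 + 1 + 1 + 1 := by norm_num
        _ ≤ (⊥ : Ideal (MvPolynomial (Fin 3) K)).height + 1 + 1 + 1 := by gcongr; exact zero_le
        _ ≤ (Ideal.span {x}).height + 1 + 1 := by gcongr
        _ ≤ p.height + 1 := by gcongr
        _ ≤ q.height := h1
        _ ≤ 2 := hqh
    exact absurd h4 (by decide)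
  refine hcQ p (hfin.mem_toFinset.2 hpmin) (hQ1 p ?_ c ?_)
  · rw [hpeq]; exact hqX
  · rw [hpeq]; exact hLq

lemma quot_equiv {K : Type*} [Field K] (c : Fin 3 → K) (hc : c 0 ≠ 0) :
    ∃ e : (MvPolynomial (Fin 3) K ⧸ Ideal.span {linform c}) ≃+* MvPolynomial (Fin 2) K,
      ∀ p, e (Ideal.Quotient.mk _ p) = psi c p := by
  have hker : Ideal.span {linform c} = RingHom.ker (psi c).toRingHom := by
    ext p
    rw [← psi_eq_zero c hc, RingHom.mem_ker]
    rfl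
  refine ⟨(Ideal.quotEquivOfEq hker).trans (RingHom.quotientKerEquivOfSurjective
    (f := (psi c).toRingHom) fun p => ⟨iot K p, psi_iot c p⟩), fun p => ?_⟩
  rfl

end
set_option synthInstance.maxHeartbeats 1000000 in
/-- Suppose `a - b = 2m` is even and `N_{m-1} ≠ 0` (unstable case), with
index of instability `k = max{ j : N_{m-j} ≠ 0 }`. Then for a general linear form `L`, writing
`S = R/(L)`, the kernel of the induced map `φ̄ : ⊕ S(-a_i) → ⊕ S(-b_j)` is a free graded
`S`-module isomorphic to `S(-(m-k)) ⊕ S(-(m+k))`: it has a free basis consisting of two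
homogeneous elements, of degrees `m - k` and `m + k`. -/
theorem statement11 {K : Type*} [Field K] [IsAlgClosed K] [CharZero K]
    (n : ℕ) (a : Fin (n + 2) → ℤ) (b : Fin n → ℤ)
    (Φ : Matrix (Fin n) (Fin (n + 2)) (MvPolynomial (Fin 3) K))
    (hΦ : ∀ j i, homog (Φ j i) (a i - b j))
    (hfin : FiniteColength n a b Φ)
    (m : ℤ) (hm : (∑ i, a i) - (∑ j, b j) = 2 * m)
    (hunstable : Nd n a Φ (m - 1) ≠ ⊥)
    (k : ℤ) (hk₁ : Nd n a Φ (m - k) ≠ ⊥) (hk₂ : ∀ j : ℤ, Nd n a Φ (m - j) ≠ ⊥ → j ≤ k) :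
    ∃ P : MvPolynomial (Fin 3) K, P ≠ 0 ∧ ∀ c : Fin 3 → K, eval c P ≠ 0 →
      ∃ u v : Fin (n + 2) → MvPolynomial (Fin 3) K ⧸ Ideal.span {linform c},
        (∃ u' ∈ degPiece (K := K) (n + 2) a (m - k),
          ∀ i, Ideal.Quotient.mk (Ideal.span {linform c}) (u' i) = u i) ∧
        (∃ v' ∈ degPiece (K := K) (n + 2) a (m + k),
          ∀ i, Ideal.Quotient.mk (Ideal.span {linform c}) (v' i) = v i) ∧
        (Φ.map (Ideal.Quotient.mk (Ideal.span {linform c}))).mulVec u = 0 ∧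
        (Φ.map (Ideal.Quotient.mk (Ideal.span {linform c}))).mulVec v = 0 ∧
        ∀ w : Fin (n + 2) → MvPolynomial (Fin 3) K ⧸ Ideal.span {linform c},
          (Φ.map (Ideal.Quotient.mk (Ideal.span {linform c}))).mulVec w = 0 →
          ∃! rs : (MvPolynomial (Fin 3) K ⧸ Ideal.span {linform c}) ×
              (MvPolynomial (Fin 3) K ⧸ Ideal.span {linform c}),
            w = rs.1 • u + rs.2 • v := by
  have hΦ' : ∀ j i, Φ j i ∈ Wd (Fin 3) K (a i - b j) := hΦ
  have hk : 0 < k := hk₂ 1 hunstable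
  obtain ⟨u, huN, hu0⟩ := Submodule.exists_mem_ne_zero_of_ne_bot hk₁
  have hud : u ∈ dP (n + 2) a (m - k) := huN.1
  have hΦu : Φ.mulVec u = 0 := huN.2
  have hmin : ∀ e < m - k, ∀ w ∈ dP (σ := Fin 3) (K := K) (n + 2) a e, Φ.mulVec w = 0 → w = 0 := by
    intro e he w hw hΦw
    by_contra hw0
    have hne : Nd n a Φ (m - (m - e)) ≠ ⊥ := by
      rw [show m - (m - e) = e by ring]
      intro h
      have hmem : w ∈ Nd n a Φ e := ⟨hw, hΦw⟩
      rw [h] at hmem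
      exact hw0 (by simpa using hmem)
    have := hk₂ _ hne
    omega
  have hcop := coprime_of_minimal a b Φ hΦ' (m - k) u hud hu0 hΦu hmin
  obtain ⟨P, hP0, hP⟩ := generic_coprime u hu0 hcop
  refine ⟨P, hP0, fun c hc => ?_⟩
  obtain ⟨hc0, hcopc⟩ := hP c hc
  obtain ⟨e, he⟩ := quot_equiv c hc0
  have hmapmul : ∀ w : Fin (n + 2) → MvPolynomial (Fin 3) K,
      (Φ.map (psi c)).mulVec (fun i => psi c (w i)) = fun j => psi c (Φ.mulVec w j) := by
    intro w
    funext j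
    simp [Matrix.mulVec, dotProduct]
  obtain ⟨D, hD⟩ := hfin
  have hu0' : (fun i => psi c (u i)) ≠ 0 := by
    intro h
    obtain ⟨i, hi⟩ := hcopc (X 0) X_prime
    apply hi
    rw [show psi c (u i) = 0 from congrFun h i]
    exact dvd_zero _
  obtain ⟨v, hvd, hΨv, hv⟩ := main_two a b (Φ.map (psi c)) (fun j i => psi_homog c (hΦ' j i))
    ⟨D, fun d hd y hy => by
      have hy' : (fun j => iot K (y j)) ∈ degPiece (K := K) n b d :=
        (mem_dP (σ := Fin 3)).2 fun j => iot_homog (mem_dP.1 hy j)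
      obtain ⟨w, hw, hwy⟩ := hD d hd hy'
      refine ⟨fun i => psi c (w i), mem_dP.2 fun i => psi_homog c (mem_dP (σ := Fin 3).1 hw i), ?_⟩
      rw [phT_apply, hmapmul]
      funext j
      have : Φ.mulVec w j = iot K (y j) := congrFun hwy j
      rw [this, psi_iot]⟩
    m hm k hk (fun i => psi c (u i)) (mem_dP.2 fun i => psi_homog c (mem_dP.1 hud i))
    (by rw [hmapmul, hΦu]; funext j; simp) hu0' hcopc
  have hmulV : ∀ w : Fin (n + 2) → MvPolynomial (Fin 3) K ⧸ Ideal.span {linform c},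
      (Φ.map (Ideal.Quotient.mk (Ideal.span {linform c}))).mulVec w = 0 ↔
      (Φ.map (psi c)).mulVec (fun i => e (w i)) = 0 := by
    intro w
    have h1 : (Φ.map (psi c)).mulVec (fun i => e (w i)) =
        fun j => e ((Φ.map (Ideal.Quotient.mk (Ideal.span {linform c}))).mulVec w j) := by
      funext j
      simp only [Matrix.mulVec, dotProduct, Matrix.map_apply, map_sum, map_mul, he]
    rw [h1]
    constructor
    · intro h
      rw [h]; funext j; simp
    · intro h
      funext j
      have := congrFun h j
      simpa using this
  have hei : ∀ p, e (Ideal.Quotient.mk _ (iot K p)) = p := fun p => by rw [he, psi_iot]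
  refine ⟨fun i => Ideal.Quotient.mk _ (u i), fun i => Ideal.Quotient.mk _ (iot K (v i)),
    ⟨u, hud, fun _ => rfl⟩, ⟨fun i => iot K (v i),
      (mem_dP (σ := Fin 3)).2 fun i => iot_homog (mem_dP.1 hvd i), fun _ => rfl⟩, ?_, ?_, ?_⟩
  · rw [hmulV]
    simp only [he]
    rw [hmapmul, hΦu]; funext j; simp
  · rw [hmulV]
    simp only [hei]
    exact hΨv
  · intro w hw
    obtain ⟨⟨r, s⟩, hrs, huniq⟩ := hv _ ((hmulV w).1 hw)
    refine ⟨(e.symm r, e.symm s), ?_, ?_⟩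
    · funext i
      apply e.injective
      have := congrFun hrs i
      simp only [Pi.add_apply, Pi.smul_apply, smul_eq_mul] at this
      simp only [Pi.add_apply, Pi.smul_apply, smul_eq_mul, map_add, map_mul, he, psi_iot,
        RingEquiv.apply_symm_apply]
      exact this
    · rintro ⟨r', s'⟩ h
      have h2 := huniq (e r', e s') (by
        funext i
        have := congrArg e (congrFun h i)
        simp only [Pi.add_apply, Pi.smul_apply, smul_eq_mul, map_add, map_mul, he, psi_iot] at this
        simp only [Pi.add_apply, Pi.smul_apply, smul_eq_mul]
        exact this)
      rw [Prod.mk.injEq] at h2 ⊢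
      exact ⟨by rw [← h2.1, RingEquiv.symm_apply_apply], by rw [← h2.2, RingEquiv.symm_apply_apply]⟩
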